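/- (Reverse Direction of Interpolation Between Default Extensions.) Let ⟨W₁, D₁⟩ and ⟨W₂, D₂⟩ be propositional default theories over a finite variable set such that no variable occurring in W₂ or in a consequent of a default of D₂ occurs in W₁ or in any prerequisite, justification or consequent of a default of D₁. Let φ be a formula with φ ∈ 𝓛(W₂ ∪ D₂). Suppose there exist: a formula γ ∈ 𝓛(W₁ ∪ D₁) ∩ 𝓛(W₂ ∪ D₂); an extension E₁ of ⟨W₁, D₁⟩ such that γ is logically equivalent to the set of formulas in 𝓛(W₁ ∪ D₁) ∩ 𝓛(W₂ ∪ D₂) entailed by E₁; and an extension E₂ of ⟨W₂ ∪ {γ}, D₂⟩ with E₂ ⊨ φ. Then Cn(E₁ ∪ E₂) is an extension of ⟨W₁ ∪ W₂, D₁ ∪ D₂⟩ containing φ; in particular ⟨W₁ ∪ W₂, D₁ ∪ D₂⟩ has an extension in which φ holds. -/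

import Mathlib

namespace NMR

/-- Propositional formulas over a variable type `V`. -/
inductive PropForm (V : Type*) : Type _ where
  | var : V → PropForm V
  | tru : PropForm V
  | fls : PropForm V
  | neg : PropForm V → PropForm V
  | conj : PropForm V → PropForm V → PropForm V
  | disj : PropForm V → PropForm V → PropForm V
  | impl : PropForm V → PropForm V → PropForm V

variable {V : Type*}

/-- Truth value of a formula under a valuation. -/
def PropForm.eval (ν : V → Bool) : PropForm V → Bool
  | .var v => ν v
  | .tru => true
  | .fls => false
  | .neg φ => !(φ.eval ν)
  | .conj φ ψ => φ.eval ν && ψ.eval ν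
  | .disj φ ψ => φ.eval ν || ψ.eval ν
  | .impl φ ψ => !(φ.eval ν) || ψ.eval ν

/-- The set of variables occurring in a formula. -/
def PropForm.vars : PropForm V → Set V
  | .var v => {v}
  | .tru => ∅
  | .fls => ∅
  | .neg φ => φ.vars
  | .conj φ ψ => φ.vars ∪ ψ.vars
  | .disj φ ψ => φ.vars ∪ ψ.vars
  | .impl φ ψ => φ.vars ∪ ψ.vars

/-- `ν ⊨ φ`. -/
def Sat (ν : V → Bool) (φ : PropForm V) : Prop := φ.eval ν = true

/-- `ν ⊨ T` for a set of formulas. -/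
def SatSet (ν : V → Bool) (T : Set (PropForm V)) : Prop := ∀ φ ∈ T, Sat ν φ

/-- `T ⊨ φ`. -/
def Entails (T : Set (PropForm V)) (φ : PropForm V) : Prop :=
  ∀ ν : V → Bool, SatSet ν T → Sat ν φ

/-- `T ⊨ Γ` for a set `Γ`. -/
def EntailsSet (T Γ : Set (PropForm V)) : Prop := ∀ φ ∈ Γ, Entails T φ

/-- A tautology is satisfied by every valuation. -/
def Tautology (φ : PropForm V) : Prop := ∀ ν : V → Bool, Sat ν φ

/-- `L(T)`: the set of variables occurring in a set of formulas. -/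
def varsOf (T : Set (PropForm V)) : Set V := ⋃ φ ∈ T, φ.vars

/-- `𝓛(S)`: the set of formulas all of whose variables lie in `S`. -/
def FormsOver (S : Set V) : Set (PropForm V) := {φ | φ.vars ⊆ S}

/-- `Cn^S(T)`: the formulas in `𝓛(S)` entailed by `T`. -/
def Cn (S : Set V) (T : Set (PropForm V)) : Set (PropForm V) :=
  {φ | φ.vars ⊆ S ∧ Entails T φ}

/-- Two sets of formulas are logically equivalent iff they have the same models. -/
def EquivTheories (T T' : Set (PropForm V)) : Prop :=
  ∀ ν : V → Bool, SatSet ν T ↔ SatSet ν T'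

/-- A Reiter default: prerequisite, a finite nonempty set of justifications,
and a consequent. -/
structure Default (V : Type*) where
  pre : PropForm V
  just : Set (PropForm V)
  just_finite : just.Finite
  just_nonempty : just.Nonempty
  cons : PropForm V

/-- All propositional consequences of `T`. -/
def CnAll (T : Set (PropForm V)) : Set (PropForm V) := {φ | Entails T φ}

/-- The closure conditions defining `Γ(S₀)` for the default theory `⟨W, D⟩`:
`W ⊆ S`, `Cn(S) = S`, and closure under the defaults applicable w.r.t. `S₀`. -/
def DLClosed (W : Set (PropForm V)) (D : Set (Default V)) (S₀ S : Set (PropForm V)) : Prop :=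
  W ⊆ S ∧ CnAll S = S ∧
    ∀ d ∈ D, d.pre ∈ S → (∀ β ∈ d.just, PropForm.neg β ∉ S₀) → d.cons ∈ S

/-- `Γ(S₀)`: the least set satisfying the closure conditions (the intersection
of all such sets, which is itself such a set). -/
def GammaOp (W : Set (PropForm V)) (D : Set (Default V)) (S₀ : Set (PropForm V)) :
    Set (PropForm V) := ⋂₀ {S | DLClosed W D S₀ S}

/-- `E` is an extension of `⟨W, D⟩` iff `Γ(E) = E`. -/
def IsExtension (W : Set (PropForm V)) (D : Set (Default V)) (E : Set (PropForm V)) : Prop :=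
  GammaOp W D E = E

/-- Cautious entailment `W |~_D φ`. -/
def Cautious (W : Set (PropForm V)) (D : Set (Default V)) (φ : PropForm V) : Prop :=
  ∀ E : Set (PropForm V), IsExtension W D E → φ ∈ E

/-- Brave entailment `W |~^b_D φ`. -/
def Brave (W : Set (PropForm V)) (D : Set (Default V)) (φ : PropForm V) : Prop :=
  ∃ E : Set (PropForm V), IsExtension W D E ∧ φ ∈ E

/-- `L(D)`: the variables occurring in prerequisites, justifications or
consequents of defaults in `D`. -/
def varsD (D : Set (Default V)) : Set V :=
  ⋃ d ∈ D, (d.pre.vars ∪ (⋃ β ∈ d.just, PropForm.vars β) ∪ d.cons.vars)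

/-- Variables occurring in consequents of defaults of `D`. -/
def consVars (D : Set (Default V)) : Set V := ⋃ d ∈ D, (Default.cons d).vars

/-! A valuation satisfies every consequence of a theory `T` over a set `S` of variables exactly when
it agrees on `S` with a model of `T`: this is compactness of `V → Bool`. Gluing such a model of `T`
to a model of a second theory is Craig interpolation for theories. Applied to `E₁` and `E₂` with
interpolant `Γ`, it shows that `E₁ ∪ E₂` entails nothing new over the language of `⟨W₂, D₂⟩`.
Modulo `Γ ⊆ E₁`, the theory `E₂` is generated by formulas sharing no variable with `⟨W₁, D₁⟩`. These
are satisfiable if `W₁ ∪ W₂` is, and then `E₁ ∪ E₂` entails nothing new over the language of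
`⟨W₁, D₁⟩` either, so each default behaves towards `E₁ ∪ E₂` as it does towards its own extension.
If `W₁ ∪ W₂` is unsatisfiable, the set of all formulas is an extension. -/

open Set

/-! ### Models and dependence on variables -/

namespace PropForm

theorem dependsOn_eval (φ : PropForm V) : DependsOn (fun ν : V → Bool => φ.eval ν) φ.vars := by
  intro ν μ h
  induction φ with
  | var v => exact h v rfl
  | tru => rfl
  | fls => rfl
  | neg φ ih => exact congrArg _ (ih h)
  | conj φ ψ ihφ ihψ | disj φ ψ ihφ ihψ | impl φ ψ ihφ ihψ =>
    simp only [eval, ihφ fun v hv => h v (.inl hv), ihψ fun v hv => h v (.inr hv)]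

theorem continuous_eval (φ : PropForm V) : Continuous (fun ν : V → Bool => φ.eval ν) := by
  have continuous_binop (f : Bool → Bool → Bool) {g h : (V → Bool) → Bool}
      (hg : Continuous g) (hh : Continuous h) : Continuous fun ν => f (g ν) (h ν) :=
    (continuous_of_discreteTopology (f := f.uncurry)).comp (hg.prodMk hh)
  induction φ with
  | var v => exact continuous_apply v
  | tru => exact continuous_const
  | fls => exact continuous_const
  | neg φ ih => exact continuous_of_discreteTopology.comp ih
  | conj φ ψ ihφ ihψ => exact continuous_binop (· && ·) ihφ ihψ
  | disj φ ψ ihφ ihψ => exact continuous_binop (· || ·) ihφ ihψ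
  | impl φ ψ ihφ ihψ => exact continuous_binop (!· || ·) ihφ ihψ

/-- The literal on the variable `v` that is true under `ν`. -/
def literal (ν : V → Bool) (v : V) : PropForm V :=
  if ν v then .var v else .neg (.var v)

theorem vars_literal (ν : V → Bool) (v : V) : (literal ν v).vars = {v} := by
  unfold literal
  split <;> rfl

end PropForm

theorem sat_literal_iff {ν μ : V → Bool} {v : V} : Sat μ (.literal ν v) ↔ μ v = ν v := by
  cases h : ν v <;> simp [PropForm.literal, Sat, PropForm.eval, h]

theorem sat_neg_iff {ν : V → Bool} {φ : PropForm V} : Sat ν (.neg φ) ↔ ¬ Sat ν φ := by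
  simp only [Sat, PropForm.eval, Bool.not_eq_true', Bool.not_eq_true]

theorem sat_conj_iff {ν : V → Bool} {φ ψ : PropForm V} :
    Sat ν (.conj φ ψ) ↔ Sat ν φ ∧ Sat ν ψ := by
  simp only [Sat, PropForm.eval, Bool.and_eq_true]

theorem not_sat_fls (ν : V → Bool) : ¬ Sat ν .fls :=
  Bool.false_ne_true

theorem exists_sat_iff_eqOn (s : Finset V) (ν : V → Bool) :
    ∃ χ : PropForm V, χ.vars ⊆ s ∧ ∀ μ : V → Bool, Sat μ χ ↔ EqOn μ ν s := by
  classical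
  induction s using Finset.induction_on with
  | empty => exact ⟨.tru, empty_subset _, fun μ => by simp [Sat, PropForm.eval]⟩
  | insert a s _ ih =>
    obtain ⟨χ, hχ, hsat⟩ := ih
    refine ⟨.conj (.literal ν a) χ, ?_, fun μ => ?_⟩
    · rw [PropForm.vars, PropForm.vars_literal, Finset.coe_insert]
      exact insert_subset_insert hχ
    · rw [sat_conj_iff, sat_literal_iff, hsat]
      simp only [Finset.coe_insert, EqOn, forall_mem_insert]

theorem dependsOn_sat {φ : PropForm V} {S : Set V} (hφ : φ ∈ FormsOver S) :
    DependsOn (fun ν => Sat ν φ) S :=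
  fun _ _ h => congrArg (· = true) (φ.dependsOn_eval fun v hv => h v (hφ hv))

theorem dependsOn_satSet_of_subset {T : Set (PropForm V)} {S : Set V} (hT : T ⊆ FormsOver S) :
    DependsOn (fun ν => SatSet ν T) S :=
  fun _ _ h => propext <| forall₂_congr fun _ hφ => (dependsOn_sat (hT hφ) h).to_iff

theorem isClosed_setOf_satSet (T : Set (PropForm V)) : IsClosed {ν | SatSet ν T} := by
  simp only [SatSet, ofPred_forall]
  exact isClosed_biInter fun φ _ => isClosed_eq φ.continuous_eval continuous_const

theorem satSet_union_iff {ν : V → Bool} {S T : Set (PropForm V)} :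
    SatSet ν (S ∪ T) ↔ SatSet ν S ∧ SatSet ν T := by
  simp only [SatSet, mem_union, or_imp, forall_and]

theorem SatSet.mono {ν : V → Bool} {S T : Set (PropForm V)} (hT : SatSet ν T) (hST : S ⊆ T) :
    SatSet ν S :=
  fun φ hφ => hT φ (hST hφ)

theorem EquivTheories.dependsOn_satSet {T T' : Set (PropForm V)} {S : Set V}
    (h : EquivTheories T T') (hT' : DependsOn (fun ν => SatSet ν T') S) :
    DependsOn (fun ν => SatSet ν T) S :=
  fun ν μ hνμ => by simpa only [h ν, h μ] using hT' hνμ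

/-- `T` has a model, i.e. is consistent. -/
def Satisfiable (T : Set (PropForm V)) : Prop := ∃ ν : V → Bool, SatSet ν T

theorem Satisfiable.mono {S T : Set (PropForm V)} (hT : Satisfiable T) (hST : S ⊆ T) :
    Satisfiable S :=
  hT.imp fun _ hν => hν.mono hST

theorem entails_of_not_satisfiable {T : Set (PropForm V)} (hT : ¬ Satisfiable T)
    (φ : PropForm V) : Entails T φ :=
  fun ν hν => (hT ⟨ν, hν⟩).elim

theorem subset_cnAll (T : Set (PropForm V)) : T ⊆ CnAll T :=
  fun _ hφ _ hν => hν _ hφ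

theorem cnAll_mono {S T : Set (PropForm V)} (hST : S ⊆ T) : CnAll S ⊆ CnAll T :=
  fun _ hφ ν hν => hφ ν (hν.mono hST)

theorem cnAll_cnAll (T : Set (PropForm V)) : CnAll (CnAll T) = CnAll T :=
  Subset.antisymm (fun _ hφ ν hν => hφ ν fun _ hψ => hψ ν hν) (subset_cnAll _)

/-! ### Interpolation between theories -/

theorem SatSet.exists_eqOn_of_cn {T : Set (PropForm V)} {S : Set V} {ν : V → Bool}
    (hν : SatSet ν (Cn S T)) : ∃ μ, SatSet μ T ∧ EqOn μ ν S := by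
  have finite_agreement (s : Finset S) : ∃ μ, SatSet μ T ∧ ∀ v ∈ s, μ v = ν v := by
    obtain ⟨χ, hχ, hsat⟩ := exists_sat_iff_eqOn (s.map (.subtype _)) ν
    have hχS : χ.vars ⊆ S := hχ.trans fun v hv => by
      obtain ⟨w, -, rfl⟩ := Finset.mem_map.1 hv
      exact w.2
    by_contra! hno
    have neg_mem : PropForm.neg χ ∈ Cn S T := ⟨hχS, fun μ hμ => sat_neg_iff.2 fun hμχ => by
      obtain ⟨v, hv, hne⟩ := hno μ hμ
      exact hne ((hsat μ).1 hμχ (Finset.mem_map_of_mem _ hv))⟩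
    exact sat_neg_iff.1 (hν _ neg_mem) ((hsat ν).2 (eqOn_refl ν _))
  obtain ⟨μ, hμT, hμν⟩ := (isClosed_setOf_satSet T).isCompact.inter_iInter_nonempty
    (fun v : S => {μ : V → Bool | μ v = ν v})
    (fun v => isClosed_eq (continuous_apply _) continuous_const)
    (fun s => by simpa [Set.Nonempty] using finite_agreement s)
  exact ⟨μ, hμT, fun v hv => mem_iInter.1 hμν ⟨v, hv⟩⟩

theorem Entails.interpolate {A B : Set (PropForm V)} {ψ : PropForm V} {S L : Set V}
    (hA : DependsOn (fun ν => SatSet ν A) S) (hB : DependsOn (fun ν => SatSet ν B) L)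
    (hψ : ψ ∈ FormsOver L) (h : Entails (A ∪ B) ψ) : Entails (Cn (S ∩ L) A ∪ B) ψ := by
  classical
  intro ν hν
  obtain ⟨hνA, hνB⟩ := satSet_union_iff.1 hν
  obtain ⟨μ, hμA, hμν⟩ := hνA.exists_eqOn_of_cn
  have agree_left : EqOn (S.piecewise μ ν) μ S := S.piecewise_eqOn μ ν
  have agree_right : EqOn (S.piecewise μ ν) ν L :=
    (S.eqOn_piecewise).2 ⟨by rwa [inter_comm], eqOn_refl ν _⟩
  have glued : SatSet (S.piecewise μ ν) (A ∪ B) :=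
    satSet_union_iff.2 ⟨(hA agree_left).mpr hμA, (hB agree_right).mpr hνB⟩
  exact (dependsOn_sat hψ agree_right).mp (h _ glued)

theorem Satisfiable.satSet_cn_empty {T : Set (PropForm V)} (hT : Satisfiable T) (ν : V → Bool) :
    SatSet ν (Cn ∅ T) := by
  obtain ⟨μ, hμ⟩ := hT
  exact fun φ hφ => (dependsOn_sat hφ.1 (by simp)).mp (hφ.2 μ hμ)

theorem Entails.of_union_of_disjoint {A B : Set (PropForm V)} {ψ : PropForm V} {S L : Set V}
    (hA : DependsOn (fun ν => SatSet ν A) S) (hB : DependsOn (fun ν => SatSet ν B) L)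
    (hLS : Disjoint L S) (hsat : Satisfiable B) (hψ : ψ ∈ FormsOver S)
    (h : Entails (A ∪ B) ψ) : Entails A ψ := by
  intro ν hν
  have interpolated : Entails (Cn (L ∩ S) B ∪ A) ψ :=
    Entails.interpolate hB hA hψ (by rwa [union_comm])
  rw [hLS.inter_eq] at interpolated
  exact interpolated ν (satSet_union_iff.2 ⟨hsat.satSet_cn_empty ν, hν⟩)

theorem Satisfiable.union_of_disjoint {A B : Set (PropForm V)} {S L : Set V}
    (hA : DependsOn (fun ν => SatSet ν A) S) (hB : DependsOn (fun ν => SatSet ν B) L)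
    (hLS : Disjoint L S) (hAsat : Satisfiable A) (hBsat : Satisfiable B) :
    Satisfiable (A ∪ B) := by
  by_contra hunsat
  obtain ⟨ν, hν⟩ := hAsat
  have entails_fls : Entails A .fls :=
    Entails.of_union_of_disjoint hA hB hLS hBsat (empty_subset _)
      (entails_of_not_satisfiable hunsat _)
  exact not_sat_fls ν (entails_fls ν hν)

/-! ### Languages of default theories -/

theorem subset_formsOver_varsOf (T : Set (PropForm V)) : T ⊆ FormsOver (varsOf T) :=
  fun _ hφ => subset_biUnion_of_mem hφ

theorem formsOver_mono {S L : Set V} (hSL : S ⊆ L) : FormsOver S ⊆ FormsOver L :=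
  fun _ hφ => Subset.trans hφ hSL

namespace Default

variable {D : Set (Default V)} {d : Default V}

theorem pre_mem_formsOver (hd : d ∈ D) : d.pre ∈ FormsOver (varsD D) :=
  fun _ hv => mem_biUnion hd (.inl (.inl hv))

theorem neg_just_mem_formsOver (hd : d ∈ D) {β : PropForm V} (hβ : β ∈ d.just) :
    .neg β ∈ FormsOver (varsD D) :=
  fun _ hv => mem_biUnion hd (.inl (.inr (mem_biUnion hβ hv)))

theorem cons_mem_formsOver (hd : d ∈ D) : d.cons ∈ FormsOver (consVars D) :=
  fun _ hv => mem_biUnion hd hv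

end Default

theorem consVars_subset_varsD (D : Set (Default V)) : consVars D ⊆ varsD D :=
  iUnion₂_mono fun _ _ => subset_union_right

/-! ### Extensions -/

variable {W W₁ W₂ Γ E E₁ E₂ S S₀ T : Set (PropForm V)} {D D₁ D₂ : Set (Default V)}

theorem DLClosed.mem_of_entails (hS : DLClosed W D S₀ S) {φ : PropForm V} (hφ : Entails S φ) :
    φ ∈ S :=
  hS.2.1.subset hφ

theorem dlClosed_union_iff :
    DLClosed (W₁ ∪ W₂) (D₁ ∪ D₂) S₀ S ↔ DLClosed W₁ D₁ S₀ S ∧ DLClosed W₂ D₂ S₀ S := by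
  simp only [DLClosed, union_subset_iff, mem_union, or_imp, forall_and]
  tauto

theorem DLClosed.context_mono (hS : DLClosed W D E S) (hE : FormsOver (varsD D) ∩ E ⊆ S₀) :
    DLClosed W D S₀ S :=
  ⟨hS.1, hS.2.1, fun d hd hpre hjust => hS.2.2 d hd hpre fun β hβ hneg =>
    hjust β hβ (hE ⟨d.neg_just_mem_formsOver hd hβ, hneg⟩)⟩

theorem DLClosed.of_conservative (hE₁ : DLClosed W D E₁ E₁) (hE₁E : E₁ ⊆ E) (hE : CnAll E = E)
    (hcons : FormsOver (varsD D) ∩ E ⊆ E₁) : DLClosed W D E E :=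
  ⟨hE₁.1.trans hE₁E, hE, fun d hd hpre hjust =>
    hE₁E (hE₁.2.2 d hd (hcons ⟨d.pre_mem_formsOver hd, hpre⟩) fun β hβ hneg =>
      hjust β hβ (hE₁E hneg))⟩

theorem dlClosed_gammaOp (W : Set (PropForm V)) (D : Set (Default V)) (S₀ : Set (PropForm V)) :
    DLClosed W D S₀ (GammaOp W D S₀) := by
  refine ⟨subset_sInter fun S hS => hS.1, ?_, fun d hd hpre hjust S hS =>
    hS.2.2 d hd (hpre S hS) hjust⟩
  exact Subset.antisymm
    (subset_sInter fun S hS _ hφ => hS.mem_of_entails (cnAll_mono (sInter_subset_of_mem hS) hφ))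
    (subset_cnAll _)

theorem isExtension_iff_isLeast : IsExtension W D E ↔ IsLeast {S | DLClosed W D E S} E := by
  refine ⟨fun hE => ⟨?_, fun S hS => ?_⟩, fun hE => ?_⟩
  · have closed : DLClosed W D E (GammaOp W D E) := dlClosed_gammaOp W D E
    rwa [show GammaOp W D E = E from hE] at closed
  · exact hE.ge.trans (sInter_subset_of_mem hS)
  · exact Subset.antisymm (sInter_subset_of_mem hE.1) (subset_sInter fun S hS => hE.2 hS)

theorem IsExtension.dlClosed (hE : IsExtension W D E) : DLClosed W D E E :=
  (isExtension_iff_isLeast.1 hE).1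

theorem IsExtension.subset_of_dlClosed (hE : IsExtension W D E) (hS : DLClosed W D E S) : E ⊆ S :=
  (isExtension_iff_isLeast.1 hE).2 hS

theorem IsExtension.satisfiable_iff (hE : IsExtension W D E) : Satisfiable E ↔ Satisfiable W := by
  refine ⟨fun h => h.mono hE.dlClosed.1, fun hW => ?_⟩
  by_contra hunsat
  have mem_all (φ : PropForm V) : φ ∈ E :=
    hE.dlClosed.mem_of_entails (entails_of_not_satisfiable hunsat φ)
  have E_subset : E ⊆ CnAll W := hE.subset_of_dlClosed
    ⟨subset_cnAll W, cnAll_cnAll W, fun d _ _ hjust =>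
      have ⟨β, hβ⟩ := d.just_nonempty
      (hjust β hβ (mem_all _)).elim⟩
  obtain ⟨ν, hν⟩ := hW
  exact hunsat ⟨ν, fun φ hφ => E_subset hφ ν hν⟩

theorem isExtension_cnAll_of_not_satisfiable (hW : ¬ Satisfiable W) (hWT : W ⊆ T) :
    IsExtension W D (CnAll T) := by
  have mem_all (φ : PropForm V) : φ ∈ CnAll T :=
    entails_of_not_satisfiable (fun hT => hW (hT.mono hWT)) φ
  refine isExtension_iff_isLeast.2 ⟨⟨fun φ _ => mem_all φ, cnAll_cnAll T, fun d _ _ _ => mem_all _⟩,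
    fun S hS φ _ => ?_⟩
  exact hS.mem_of_entails (entails_of_not_satisfiable (fun h => hW (h.mono hS.1)) φ)

/-- The facts `W` together with the consequents lying in `E` of defaults of `D`; for an extension
`E` of `⟨W, D⟩` these axiomatize `E`. -/
def generators (W : Set (PropForm V)) (D : Set (Default V)) (E : Set (PropForm V)) :
    Set (PropForm V) := W ∪ Default.cons '' D ∩ E

theorem generators_union_left : generators (W ∪ Γ) D E = generators W D E ∪ Γ :=
  union_right_comm _ _ _

theorem generators_subset_formsOver :
    generators W D E ⊆ FormsOver (varsOf W ∪ consVars D) := by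
  refine union_subset ((subset_formsOver_varsOf W).trans (formsOver_mono subset_union_left)) ?_
  rintro _ ⟨⟨d, hd, rfl⟩, -⟩
  exact formsOver_mono subset_union_right (d.cons_mem_formsOver hd)

theorem IsExtension.equivTheories_generators (hE : IsExtension W D E) :
    EquivTheories E (generators W D E) := by
  have generators_subset : generators W D E ⊆ E := union_subset hE.dlClosed.1 inter_subset_right
  have E_subset : E ⊆ CnAll (generators W D E) := hE.subset_of_dlClosed
    ⟨subset_union_left.trans (subset_cnAll _), cnAll_cnAll _, fun d hd hpre hjust =>
      have pre_mem : d.pre ∈ E :=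
        hE.dlClosed.mem_of_entails (cnAll_mono generators_subset hpre)
      subset_cnAll _ (.inr ⟨⟨d, hd, rfl⟩, hE.dlClosed.2.2 d hd pre_mem hjust⟩)⟩
  exact fun ν => ⟨fun hν => hν.mono generators_subset, fun hν φ hφ => E_subset hφ ν hν⟩

theorem dependsOn_satSet_generators :
    DependsOn (fun ν => SatSet ν (generators W D E)) (varsOf W ∪ varsD D) :=
  dependsOn_satSet_of_subset <| generators_subset_formsOver.trans <|
    formsOver_mono (union_subset_union_right _ (consVars_subset_varsD D))

theorem IsExtension.dependsOn_satSet (hE : IsExtension W D E) :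
    DependsOn (fun ν => SatSet ν E) (varsOf W ∪ varsD D) :=
  hE.equivTheories_generators.dependsOn_satSet dependsOn_satSet_generators

theorem IsExtension.union (hE₁ : IsExtension W₁ D₁ E₁) (hE₂ : IsExtension (W₂ ∪ Γ) D₂ E₂)
    (hΓ : Γ ⊆ E₁) (hcons₁ : FormsOver (varsD D₁) ∩ CnAll (E₁ ∪ E₂) ⊆ E₁)
    (hcons₂ : FormsOver (varsD D₂) ∩ CnAll (E₁ ∪ E₂) ⊆ E₂) :
    IsExtension (W₁ ∪ W₂) (D₁ ∪ D₂) (CnAll (E₁ ∪ E₂)) := by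
  have hE₁E : E₁ ⊆ CnAll (E₁ ∪ E₂) := subset_union_left.trans (subset_cnAll _)
  have hE₂E : E₂ ⊆ CnAll (E₁ ∪ E₂) := subset_union_right.trans (subset_cnAll _)
  refine isExtension_iff_isLeast.2 ⟨dlClosed_union_iff.2 ⟨?_, ?_⟩, fun S hS => ?_⟩
  · exact hE₁.dlClosed.of_conservative hE₁E (cnAll_cnAll _) hcons₁
  · have closed₂ := hE₂.dlClosed.of_conservative hE₂E (cnAll_cnAll _) hcons₂
    exact ⟨subset_union_left.trans closed₂.1, closed₂.2⟩
  · obtain ⟨hS₁, hS₂⟩ := dlClosed_union_iff.1 hS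
    have E₁_subset : E₁ ⊆ S := hE₁.subset_of_dlClosed (hS₁.context_mono hcons₁)
    have closed₂ : DLClosed (W₂ ∪ Γ) D₂ (CnAll (E₁ ∪ E₂)) S :=
      ⟨union_subset hS₂.1 (hΓ.trans E₁_subset), hS₂.2⟩
    have E₂_subset : E₂ ⊆ S := hE₂.subset_of_dlClosed (closed₂.context_mono hcons₂)
    exact fun φ hφ => hS₁.mem_of_entails (cnAll_mono (union_subset E₁_subset E₂_subset) hφ)

/-! ### Interpolation between extensions -/

theorem IsExtension.conservative_left (hE₁ : IsExtension W₁ D₁ E₁)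
    (hE₂ : IsExtension (W₂ ∪ Γ) D₂ E₂) (hΓ : Γ ⊆ E₁)
    (hdisj : Disjoint (varsOf W₂ ∪ consVars D₂) (varsOf W₁ ∪ varsD D₁)) (hsat : Satisfiable E₂) :
    FormsOver (varsOf W₁ ∪ varsD D₁) ∩ CnAll (E₁ ∪ E₂) ⊆ E₁ := by
  rintro ψ ⟨hψ, hE⟩
  have satSet_E₂_iff (ν : V → Bool) :
      SatSet ν E₂ ↔ SatSet ν (generators W₂ D₂ E₂) ∧ SatSet ν Γ := by
    rw [hE₂.equivTheories_generators ν, generators_union_left, satSet_union_iff]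
  have entails_generators : Entails (E₁ ∪ generators W₂ D₂ E₂) ψ := fun ν hν => by
    obtain ⟨hν₁, hν₂⟩ := satSet_union_iff.1 hν
    exact hE ν (satSet_union_iff.2 ⟨hν₁, (satSet_E₂_iff ν).2 ⟨hν₂, hν₁.mono hΓ⟩⟩)
  exact hE₁.dlClosed.mem_of_entails <|
    entails_generators.of_union_of_disjoint hE₁.dependsOn_satSet
      (dependsOn_satSet_of_subset generators_subset_formsOver) hdisj
      (hsat.imp fun ν hν => ((satSet_E₂_iff ν).1 hν).1) hψ

theorem IsExtension.satisfiable_of_disjoint (hE₁ : IsExtension W₁ D₁ E₁)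
    (hE₂ : IsExtension (W₂ ∪ Γ) D₂ E₂) (hΓ : Γ ⊆ E₁)
    (hdisj : Disjoint (varsOf W₂) (varsOf W₁ ∪ varsD D₁)) (hsat : Satisfiable (W₁ ∪ W₂)) :
    Satisfiable E₂ := by
  have hE₁W₂ : Satisfiable (E₁ ∪ W₂) := Satisfiable.union_of_disjoint hE₁.dependsOn_satSet
    (dependsOn_satSet_of_subset (subset_formsOver_varsOf W₂)) hdisj
    (hE₁.satisfiable_iff.2 (hsat.mono subset_union_left)) (hsat.mono subset_union_right)
  exact hE₂.satisfiable_iff.2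
    (hE₁W₂.mono (union_subset subset_union_right (hΓ.trans subset_union_left)))

theorem IsExtension.conservative_right (hE₁ : IsExtension W₁ D₁ E₁)
    (hΓ : EquivTheories Γ (Cn ((varsOf W₁ ∪ varsD D₁) ∩ (varsOf W₂ ∪ varsD D₂)) E₁))
    (hE₂ : IsExtension (W₂ ∪ Γ) D₂ E₂) :
    FormsOver (varsOf W₂ ∪ varsD D₂) ∩ CnAll (E₁ ∪ E₂) ⊆ E₂ := by
  rintro ψ ⟨hψ, hE⟩
  have dependsOn_Γ : DependsOn (fun ν => SatSet ν Γ) (varsOf W₂ ∪ varsD D₂) :=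
    hΓ.dependsOn_satSet (dependsOn_satSet_of_subset fun _ hχ => hχ.1.trans inter_subset_right)
  have dependsOn_E₂ : DependsOn (fun ν => SatSet ν E₂) (varsOf W₂ ∪ varsD D₂) := by
    refine hE₂.equivTheories_generators.dependsOn_satSet fun ν μ h => ?_
    simp only [generators_union_left, satSet_union_iff]
    exact congrArg₂ And (dependsOn_satSet_generators h) (dependsOn_Γ h)
  have interpolated := Entails.interpolate hE₁.dependsOn_satSet dependsOn_E₂ hψ hE
  refine hE₂.dlClosed.mem_of_entails fun ν hν => interpolated ν (satSet_union_iff.2 ⟨?_, hν⟩)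
  exact (hΓ ν).1 (hν.mono (subset_union_right.trans hE₂.dlClosed.1))

theorem reverse_interpolation_between_extensions_general {φ : PropForm V}
    (hdisj : Disjoint (varsOf W₂ ∪ consVars D₂) (varsOf W₁ ∪ varsD D₁))
    (hE₁ : IsExtension W₁ D₁ E₁)
    (hΓ : EquivTheories Γ (Cn ((varsOf W₁ ∪ varsD D₁) ∩ (varsOf W₂ ∪ varsD D₂)) E₁))
    (hE₂ : IsExtension (W₂ ∪ Γ) D₂ E₂) (hφ : Entails E₂ φ) :
    IsExtension (W₁ ∪ W₂) (D₁ ∪ D₂) (CnAll (E₁ ∪ E₂)) ∧ φ ∈ CnAll (E₁ ∪ E₂) := by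
  have Γ_subset : Γ ⊆ E₁ := fun ψ hψ => hE₁.dlClosed.mem_of_entails fun ν hν =>
    (hΓ ν).2 (fun _ hχ => hχ.2 ν hν) ψ hψ
  refine ⟨?_, cnAll_mono subset_union_right hφ⟩
  by_cases hsat : Satisfiable (W₁ ∪ W₂)
  · have hE₂sat : Satisfiable E₂ :=
      hE₁.satisfiable_of_disjoint hE₂ Γ_subset (hdisj.mono_left subset_union_left) hsat
    have formsOver_varsD (W : Set (PropForm V)) (D : Set (Default V)) :
        FormsOver (varsD D) ⊆ FormsOver (varsOf W ∪ varsD D) := formsOver_mono subset_union_right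
    exact hE₁.union hE₂ Γ_subset
      ((inter_subset_inter_left _ (formsOver_varsD W₁ D₁)).trans
        (hE₁.conservative_left hE₂ Γ_subset hdisj hE₂sat))
      ((inter_subset_inter_left _ (formsOver_varsD W₂ D₂)).trans
        (hE₁.conservative_right hΓ hE₂))
  · exact isExtension_cnAll_of_not_satisfiable hsat
      (union_subset_union hE₁.dlClosed.1 (subset_union_left.trans hE₂.dlClosed.1))

/-- Reverse Direction of Interpolation Between Default Extensions. -/
theorem reverse_interpolation_between_extensions {V : Type*} [Finite V]
    (W₁ W₂ : Set (PropForm V)) (D₁ D₂ : Set (Default V)) (φ : PropForm V)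
    (hdisj : (varsOf W₂ ∪ consVars D₂) ∩ (varsOf W₁ ∪ varsD D₁) = ∅)
    (hφ : φ.vars ⊆ varsOf W₂ ∪ varsD D₂)
    (γ : PropForm V)
    (hγ : γ.vars ⊆ (varsOf W₁ ∪ varsD D₁) ∩ (varsOf W₂ ∪ varsD D₂))
    (E₁ : Set (PropForm V)) (hE₁ : IsExtension W₁ D₁ E₁)
    (hequiv : ∀ ν : V → Bool, Sat ν γ ↔
      SatSet ν {ψ | ψ.vars ⊆ (varsOf W₁ ∪ varsD D₁) ∩ (varsOf W₂ ∪ varsD D₂) ∧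
        Entails E₁ ψ})
    (E₂ : Set (PropForm V)) (hE₂ : IsExtension (W₂ ∪ {γ}) D₂ E₂)
    (hE₂φ : Entails E₂ φ) :
    (IsExtension (W₁ ∪ W₂) (D₁ ∪ D₂) (CnAll (E₁ ∪ E₂)) ∧ φ ∈ CnAll (E₁ ∪ E₂)) ∧
    ∃ E : Set (PropForm V), IsExtension (W₁ ∪ W₂) (D₁ ∪ D₂) E ∧ φ ∈ E := by
  have h := reverse_interpolation_between_extensions_general (Γ := {γ})
    (disjoint_iff_inter_eq_empty.2 hdisj) hE₁ (by simpa [EquivTheories, SatSet, Cn] using hequiv)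
    hE₂ hE₂φ
  exact ⟨h, _, h⟩

end NMR
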